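/- Let Q, N ≥ 1, for each n = 1,…,N let y_n ∈ ℝ^Q have all components positive with Σ_{j=1}^Q (y_n)_j = 1, and let f_n : [0,∞) → ℝ^Q be differentiable with f_n'(t) = y_n − σ(f_n(t)) for all t ≥ 0. Then: (i) for each n, Σ_{j=1}^Q f_n(t)_j = c_n := Σ_{j=1}^Q f_n(0)_j for all t ≥ 0, so the concatenated trajectory x(t) = (f_1(t)ᵀ,…,f_N(t)ᵀ)ᵀ ∈ ℝ^{QN} is constrained to the product of affine hyperplanes H_{c_1} × ⋯ × H_{c_N}; and (ii) x(t) converges as t → ∞ to the point x*(C) = (f_{*,c_1}ᵀ,…,f_{*,c_N}ᵀ)ᵀ, where (f_{*,c_n})_j = log (y_n)_j + (1/Q)(c_n − Σ_{i=1}^Q log (y_n)_i). -/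

import Mathlib

open Finset Filter

/-- The softmax function on ℝ^Q. -/
noncomputable def softmax {Q : ℕ} (z : Fin Q → ℝ) : Fin Q → ℝ :=
  fun j => Real.exp (z j) / ∑ i, Real.exp (z i)

/-!
Writing `y = σ(w)` with `∑ⱼ wⱼ = c`, the flow `f' = σ(w) - σ(f)` conserves `∑ⱼ fⱼ`, and the squared
distance `V = ∑ⱼ (fⱼ - wⱼ)²` satisfies `V' = -2 ∑ⱼ (fⱼ - wⱼ)(σ(f)ⱼ - σ(w)ⱼ)`. Since
`σ(z)ⱼ = exp (zⱼ - log ∑ᵢ exp zᵢ)`, the mean value inequality for `exp` makes softmax strongly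
monotone on each hyperplane `H_c`, with any common lower bound `p` of the components of `σ(f)` and
`σ(w)` as constant. Taking `p = 0` bounds the trajectory; boundedness gives a uniform `p > 0`, and
then `V` decays like `exp (-2 p t)` by Grönwall's inequality.
-/

section

open Real Set Topology

theorem mul_sub_sq_le_sub_mul_exp_sub_exp {p a b : ℝ} (ha : p ≤ exp a) (hb : p ≤ exp b) :
    p * (a - b) ^ 2 ≤ (a - b) * (exp a - exp b) := by
  wlog hab : b ≤ a generalizing a b
  · linarith [this hb ha (le_of_not_ge hab)]
  have exp_sub_le : exp b * (a - b) ≤ exp a - exp b := by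
    have exp_factor : exp a = exp b * exp (a - b) := by rw [← exp_add, add_sub_cancel]
    rw [exp_factor]
    nlinarith [add_one_le_exp (a - b), exp_pos b]
  have gap_nonneg : 0 ≤ a - b := sub_nonneg.2 hab
  calc p * (a - b) ^ 2 = (a - b) * (p * (a - b)) := by ring
    _ ≤ (a - b) * (exp a - exp b) := by
      gcongr
      exact (mul_le_mul_of_nonneg_right hb gap_nonneg).trans exp_sub_le

theorem sum_sq_le_sum_sub_const_sq {ι : Type*} {s : Finset ι} {g : ι → ℝ}
    (hg : ∑ i ∈ s, g i = 0) (a : ℝ) : ∑ i ∈ s, g i ^ 2 ≤ ∑ i ∈ s, (g i - a) ^ 2 := by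
  have sum_sub_sq : ∑ i ∈ s, (g i - a) ^ 2 = ∑ i ∈ s, g i ^ 2 + #s * a ^ 2 := by
    simp only [sub_sq, sum_add_distrib, sum_sub_distrib, ← sum_mul, ← mul_sum, hg, sum_const,
      nsmul_eq_mul]
    ring
  rw [sum_sub_sq]
  exact le_add_of_nonneg_right (by positivity)

theorem le_mul_exp_of_hasDerivWithinAt_le {V V' : ℝ → ℝ} {a k : ℝ}
    (hV : ∀ t ∈ Ici a, HasDerivWithinAt V (V' t) (Ici a) t)
    (hle : ∀ t ∈ Ici a, V' t ≤ k * V t) {t : ℝ} (ht : t ∈ Ici a) :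
    V t ≤ V a * exp (k * (t - a)) := by
  rw [← gronwallBound_ε0]
  refine le_gronwallBound_of_liminf_deriv_right_le (f' := V') (b := t)
    (fun s hs => (hV s hs.1).continuousWithinAt.mono Icc_subset_Ici_self)
    (fun s hs r hr => ?_) le_rfl (fun s hs => by simpa using hle s hs.1) t ⟨ht, le_rfl⟩
  exact ((hV s hs.1).mono (Ici_subset_Ici.2 hs.1)).liminf_right_slope_le hr

section Fintype

variable {ι : Type*} [Fintype ι]

/-- The log-partition function `log ∑ᵢ exp zᵢ`, which normalizes softmax. -/
noncomputable def logSumExp (z : ι → ℝ) : ℝ :=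
  log (∑ i, exp (z i))

/-- The squared Euclidean distance on `ι → ℝ`, whose built-in norm is the sup norm. -/
def sqDist (z w : ι → ℝ) : ℝ :=
  ∑ j, (z j - w j) ^ 2

theorem sqDist_nonneg (z w : ι → ℝ) : 0 ≤ sqDist z w :=
  sum_nonneg fun _ _ => sq_nonneg _

theorem norm_sub_le_sqrt_sqDist (z w : ι → ℝ) : ‖z - w‖ ≤ √(sqDist z w) := by
  refine (pi_norm_le_iff_of_nonneg (sqrt_nonneg _)).2 fun j => abs_le_sqrt ?_
  exact single_le_sum (f := fun j => (z j - w j) ^ 2) (fun _ _ => sq_nonneg _) (mem_univ j)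

variable [Nonempty ι]

theorem sum_exp_pos (z : ι → ℝ) : 0 < ∑ i, exp (z i) :=
  sum_pos (fun _ _ => exp_pos _) univ_nonempty

theorem sum_add_one_div_card_mul_sub_sum (l : ι → ℝ) (c : ℝ) :
    ∑ j, (l j + 1 / Fintype.card ι * (c - ∑ i, l i)) = c := by
  have card_ne_zero : (Fintype.card ι : ℝ) ≠ 0 := Nat.cast_ne_zero.2 Fintype.card_ne_zero
  simp only [sum_add_distrib, sum_const, card_univ, nsmul_eq_mul]
  field_simp
  ring

end Fintype

variable {Q : ℕ}

theorem softmax_nonneg (z : Fin Q → ℝ) (j : Fin Q) : 0 ≤ softmax z j :=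
  div_nonneg (exp_pos _).le (sum_nonneg fun _ _ => (exp_pos _).le)

theorem softmax_log_add_const {y : Fin Q → ℝ} (hpos : ∀ j, 0 < y j) (hy : ∑ j, y j = 1) (a : ℝ) :
    softmax (fun j => log (y j) + a) = y := by
  ext j
  simp only [softmax, exp_add, exp_log (hpos _), ← sum_mul, hy, one_mul]
  exact mul_div_cancel_right₀ _ (exp_pos a).ne'

section Softmax

variable [NeZero Q]

theorem softmax_eq_exp_sub_logSumExp (z : Fin Q → ℝ) (j : Fin Q) :
    softmax z j = exp (z j - logSumExp z) := by
  rw [exp_sub, logSumExp, exp_log (sum_exp_pos z), softmax]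

theorem sum_softmax (z : Fin Q → ℝ) : ∑ j, softmax z j = 1 := by
  simp only [softmax, ← sum_div, div_self (sum_exp_pos z).ne']

theorem exp_neg_two_mul_div_le_softmax {z : Fin Q → ℝ} {B : ℝ} (hz : ‖z‖ ≤ B) (j : Fin Q) :
    exp (-(2 * B)) / Q ≤ softmax z j := by
  have abs_le_bound (i : Fin Q) : |z i| ≤ B := (norm_le_pi_norm z i).trans hz
  have numerator_ge : exp (-B) ≤ exp (z j) := exp_le_exp.2 (neg_le_of_abs_le (abs_le_bound j))
  have denominator_le : ∑ i, exp (z i) ≤ Q * exp B := by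
    simpa using sum_le_card_nsmul univ (fun i => exp (z i)) (exp B) fun i _ =>
      exp_le_exp.2 (le_of_abs_le (abs_le_bound i))
  calc exp (-(2 * B)) / Q = exp (-B) / (Q * exp B) := by
        rw [mul_comm (Q : ℝ), ← div_div, ← exp_sub]
        ring_nf
    _ ≤ softmax z j := div_le_div₀ (exp_pos _).le numerator_ge (sum_exp_pos z) denominator_le

theorem mul_sqDist_le_sum_sub_mul_softmax_sub {z w : Fin Q → ℝ} {p : ℝ} (hp : 0 ≤ p)
    (hz : ∀ j, p ≤ softmax z j) (hw : ∀ j, p ≤ softmax w j) (hsum : ∑ j, z j = ∑ j, w j) :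
    p * sqDist z w ≤ ∑ j, (z j - w j) * (softmax z j - softmax w j) := by
  set a := logSumExp z - logSumExp w with ha
  have sum_softmax_sub : ∑ j, (softmax z j - softmax w j) = 0 := by
    rw [sum_sub_distrib, sum_softmax, sum_softmax, sub_self]
  have sum_sub : ∑ j, (z j - w j) = 0 := by rw [sum_sub_distrib, hsum, sub_self]
  calc p * sqDist z w ≤ p * ∑ j, (z j - w j - a) ^ 2 :=
        mul_le_mul_of_nonneg_left (sum_sq_le_sum_sub_const_sq sum_sub a) hp
    _ = ∑ j, p * ((z j - logSumExp z) - (w j - logSumExp w)) ^ 2 := by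
        rw [mul_sum]
        exact sum_congr rfl fun j _ => by rw [ha]; ring
    _ ≤ ∑ j, ((z j - logSumExp z) - (w j - logSumExp w)) * (softmax z j - softmax w j) := by
        simp only [softmax_eq_exp_sub_logSumExp] at hz hw ⊢
        exact sum_le_sum fun j _ => mul_sub_sq_le_sub_mul_exp_sub_exp (hz j) (hw j)
    _ = ∑ j, (z j - w j) * (softmax z j - softmax w j)
          - a * ∑ j, (softmax z j - softmax w j) := by
        rw [mul_sum, ← sum_sub_distrib]
        exact sum_congr rfl fun j _ => by rw [ha]; ring
    _ = ∑ j, (z j - w j) * (softmax z j - softmax w j) := by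
        rw [sum_softmax_sub, mul_zero, sub_zero]

end Softmax

/-- `f` solves the cross-entropy gradient flow `f' = y - σ(f)` on `[0, ∞)`, with one-sided
derivative at `0`. -/
def IsSoftmaxFlow (y : Fin Q → ℝ) (f : ℝ → Fin Q → ℝ) : Prop :=
  ∀ t ∈ Ici (0 : ℝ), HasDerivWithinAt f (y - softmax (f t)) (Ici 0) t

namespace IsSoftmaxFlow

variable {y w : Fin Q → ℝ} {f : ℝ → Fin Q → ℝ} {t : ℝ}

theorem hasDerivWithinAt_apply (hf : IsSoftmaxFlow y f) (ht : t ∈ Ici (0 : ℝ)) (j : Fin Q) :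
    HasDerivWithinAt (fun s => f s j) (y j - softmax (f t) j) (Ici 0) t :=
  hasDerivWithinAt_pi.1 (hf t ht) j

theorem hasDerivWithinAt_sqDist (hf : IsSoftmaxFlow (softmax w) f) (ht : t ∈ Ici (0 : ℝ)) :
    HasDerivWithinAt (fun s => sqDist (f s) w)
      (-2 * ∑ j, (f t j - w j) * (softmax (f t) j - softmax w j)) (Ici 0) t := by
  rw [mul_sum]
  refine HasDerivWithinAt.fun_sum fun j _ => ?_
  refine (((hf.hasDerivWithinAt_apply ht j).sub_const (w j)).fun_pow 2).congr_deriv ?_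
  push_cast
  ring

variable [NeZero Q]

theorem sum_eq_sum_zero (hf : IsSoftmaxFlow y f) (hy : ∑ j, y j = 1) (ht : t ∈ Ici (0 : ℝ)) :
    ∑ j, f t j = ∑ j, f 0 j := by
  have hasDeriv_sum (s : ℝ) (hs : s ∈ Ici (0 : ℝ)) :
      HasDerivWithinAt (fun s => ∑ j, f s j) 0 (Ici 0) s := by
    refine (HasDerivWithinAt.fun_sum fun j _ => hf.hasDerivWithinAt_apply hs j).congr_deriv ?_
    rw [sum_sub_distrib, hy, sum_softmax, sub_self]
  exact constant_of_has_deriv_right_zero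
    (fun s hs => (hasDeriv_sum s hs.1).continuousWithinAt.mono Icc_subset_Ici_self)
    (fun s hs => (hasDeriv_sum s hs.1).mono (Ici_subset_Ici.2 hs.1)) t ⟨ht, le_rfl⟩

theorem sqDist_le_mul_exp (hf : IsSoftmaxFlow (softmax w) f) (hsum : ∑ j, f 0 j = ∑ j, w j)
    {p : ℝ} (hp : 0 ≤ p) (hfp : ∀ s ∈ Ici (0 : ℝ), ∀ j, p ≤ softmax (f s) j)
    (hwp : ∀ j, p ≤ softmax w j) (ht : t ∈ Ici (0 : ℝ)) :
    sqDist (f t) w ≤ sqDist (f 0) w * exp (-(2 * p) * t) := by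
  have deriv_le (s : ℝ) (hs : s ∈ Ici (0 : ℝ)) :
      -2 * ∑ j, (f s j - w j) * (softmax (f s) j - softmax w j)
        ≤ -(2 * p) * sqDist (f s) w := by
    have sum_eq : ∑ j, f s j = ∑ j, w j := (hf.sum_eq_sum_zero (sum_softmax w) hs).trans hsum
    linarith [mul_sqDist_le_sum_sub_mul_softmax_sub hp (hfp s hs) hwp sum_eq]
  simpa only [sub_zero] using
    le_mul_exp_of_hasDerivWithinAt_le (fun s hs => hf.hasDerivWithinAt_sqDist hs) deriv_le ht

theorem norm_le_norm_add_sqrt_sqDist (hf : IsSoftmaxFlow (softmax w) f)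
    (hsum : ∑ j, f 0 j = ∑ j, w j) (ht : t ∈ Ici (0 : ℝ)) :
    ‖f t‖ ≤ ‖w‖ + √(sqDist (f 0) w) := by
  have sqDist_le : sqDist (f t) w ≤ sqDist (f 0) w := by
    simpa using hf.sqDist_le_mul_exp hsum le_rfl (fun s _ => softmax_nonneg (f s))
      (softmax_nonneg w) ht
  calc ‖f t‖ ≤ ‖w‖ + ‖f t - w‖ := norm_le_norm_add_norm_sub' (f t) w
    _ ≤ ‖w‖ + √(sqDist (f 0) w) := by
      gcongr
      exact (norm_sub_le_sqrt_sqDist _ _).trans (sqrt_le_sqrt sqDist_le)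

theorem tendsto_of_sum_eq (hf : IsSoftmaxFlow (softmax w) f) (hsum : ∑ j, f 0 j = ∑ j, w j) :
    Tendsto f atTop (𝓝 w) := by
  set B := ‖w‖ + √(sqDist (f 0) w)
  set p := exp (-(2 * B)) / Q
  have p_pos : 0 < p := div_pos (exp_pos _) (Nat.cast_pos.2 (NeZero.pos Q))
  have decay (t : ℝ) (ht : t ∈ Ici (0 : ℝ)) :
      sqDist (f t) w ≤ sqDist (f 0) w * exp (-(2 * p) * t) :=
    hf.sqDist_le_mul_exp hsum p_pos.le
      (fun s hs => exp_neg_two_mul_div_le_softmax (hf.norm_le_norm_add_sqrt_sqDist hsum hs))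
      (exp_neg_two_mul_div_le_softmax (le_add_of_nonneg_right (sqrt_nonneg _))) ht
  have bound_tendsto : Tendsto (fun t => sqDist (f 0) w * exp (-(2 * p) * t)) atTop (𝓝 0) := by
    have exponent_tendsto : Tendsto (fun t => -(2 * p) * t) atTop atBot :=
      tendsto_id.const_mul_atTop_of_neg (by linarith)
    simpa using (tendsto_exp_atBot.comp exponent_tendsto).const_mul (sqDist (f 0) w)
  have sqDist_tendsto : Tendsto (fun t => sqDist (f t) w) atTop (𝓝 0) :=
    squeeze_zero' (Eventually.of_forall fun _ => sqDist_nonneg _ _)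
      ((eventually_ge_atTop 0).mono decay) bound_tendsto
  rw [tendsto_iff_norm_sub_tendsto_zero]
  exact squeeze_zero (fun _ => norm_nonneg _) (fun t => norm_sub_le_sqrt_sqDist (f t) w)
    (by simpa using sqDist_tendsto.sqrt)

end IsSoftmaxFlow

end

/-- Decoupled cross-entropy flows for N data points: (i) each coordinate sum
Σⱼ fₙ(t)ⱼ is conserved, so the concatenated trajectory stays in the product of
affine hyperplanes H_{c₁} × ⋯ × H_{c_N}; (ii) the concatenated trajectory
converges as t → ∞ to x*(C) whose n-th block is f_{*,cₙ} with
(f_{*,cₙ})ⱼ = log (yₙ)ⱼ + (1/Q)(cₙ − Σᵢ log (yₙ)ᵢ). -/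
theorem stmt_17 (Q N : ℕ) (hQ : 1 ≤ Q) (hN : 1 ≤ N)
    (y : Fin N → Fin Q → ℝ)
    (hypos : ∀ n j, 0 < y n j) (hy : ∀ n, ∑ j, y n j = 1)
    (f : Fin N → ℝ → Fin Q → ℝ)
    (hode : ∀ n, ∀ t ∈ Set.Ici (0 : ℝ),
      HasDerivWithinAt (f n) (y n - softmax (f n t)) (Set.Ici 0) t)
    (c : Fin N → ℝ) (hc : ∀ n, c n = ∑ j, f n 0 j)
    (xstar : Fin N → Fin Q → ℝ)
    (hxstar : ∀ n j, xstar n j =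
      Real.log (y n j) + (1 / Q) * (c n - ∑ i, Real.log (y n i))) :
    (∀ n, ∀ t ∈ Set.Ici (0 : ℝ), ∑ j, f n t j = c n) ∧
    Tendsto (fun t => (fun n => f n t)) atTop (nhds xstar) := by
  have : NeZero Q := ⟨Nat.one_le_iff_ne_zero.1 hQ⟩
  have flow (n : Fin N) : IsSoftmaxFlow (y n) (f n) := hode n
  have xstar_eq (n : Fin N) : xstar n =
      fun j => Real.log (y n j) + 1 / Q * (c n - ∑ i, Real.log (y n i)) := funext (hxstar n)
  have softmax_xstar (n : Fin N) : softmax (xstar n) = y n := by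
    rw [xstar_eq, softmax_log_add_const (hypos n) (hy n)]
  have sum_xstar (n : Fin N) : ∑ j, f n 0 j = ∑ j, xstar n j := by
    simpa only [xstar_eq, hc, Fintype.card_fin] using
      (sum_add_one_div_card_mul_sub_sum (fun j => Real.log (y n j)) (c n)).symm
  refine ⟨fun n t ht => ?_, tendsto_pi_nhds.2 fun n => ?_⟩
  · rw [(flow n).sum_eq_sum_zero (hy n) ht, hc]
  · exact ((softmax_xstar n).symm ▸ flow n).tendsto_of_sum_eq (sum_xstar n)
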